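/- For the Weierstrass ℘-function with period lattice L_ω = ω·ℤ[τ] satisfying ℘′(z)² = 4℘(z)³ − 1, one has ℘(ω/6, L_ω) = 1 + ∛2 + ∛4. -/

import Mathlib

noncomputable section

open Complex Real ComplexConjugate

/-- `τ = (−1+√−3)/2`, a primitive cube root of unity. -/
def tau : ℂ := (-1 + Real.sqrt 3 * Complex.I) / 2

/-- `√−3 = 1 + 2τ`, the square root of `−3` with positive imaginary part. -/
def sqrtm3 : ℂ := Real.sqrt 3 * Complex.I

/-- The ring of integers `O_K = ℤ[τ]` of `K = ℚ(√−3)`, as a subring of `ℂ`. -/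
def Eis : Subring ℂ := Subring.closure {tau}

/-- `τ` as an element of `ℤ[τ]`. -/
def tauO : Eis := ⟨tau, Subring.subset_closure rfl⟩

/-- `√−3` as an element of `ℤ[τ]`. -/
def sqrtm3O : Eis := 1 + 2 * tauO

/-- Membership in the lattice `L_ω = ω·ℤ[τ]`. -/
def inLattice (ω : ℝ) (z : ℂ) : Prop := ∃ a : Eis, z = (ω : ℂ) * a

/-- The Weierstrass `℘`-function of the lattice `L_ω = ω·ℤ[τ]`. -/
def wp (ω : ℝ) (z : ℂ) : ℂ :=
  1 / z ^ 2 + ∑' a : {w : ℂ // inLattice ω w ∧ w ≠ 0},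
    (1 / (z - (a : ℂ)) ^ 2 - 1 / (a : ℂ) ^ 2)

/-- The Weierstrass `ζ`-function of the lattice `L_ω = ω·ℤ[τ]`. -/
def wzeta (ω : ℝ) (z : ℂ) : ℂ :=
  1 / z + ∑' a : {w : ℂ // inLattice ω w ∧ w ≠ 0},
    (1 / (z - (a : ℂ)) + 1 / (a : ℂ) + z / (a : ℂ) ^ 2)

/-- The real cube root of 2, as a complex number. -/
def cbrt2 : ℂ := ((2 : ℝ) ^ ((1 : ℝ) / 3) : ℝ)

/-- The real cube root of 4, as a complex number. -/
def cbrt4 : ℂ := ((4 : ℝ) ^ ((1 : ℝ) / 3) : ℝ)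


section RealPart
open Set Filter Topology

structure RealWP (w : ℝ) (p q e ed : ℝ → ℝ) : Prop where
  hw : 0 < w
  hp : ∀ t ∈ Ioo 0 w, HasDerivAt p (q t) t
  hq : ∀ t ∈ Ioo 0 w, HasDerivAt q (6 * p t ^ 2) t
  ode : ∀ t ∈ Ioo 0 w, q t ^ 2 = 4 * p t ^ 3 - 1
  odd : ∀ t, q (w - t) = - q t
  even : ∀ t, p (w - t) = p t
  pe : ∀ t ∈ Ioo 0 w, p t = 1 / t ^ 2 + e t
  qe : ∀ t ∈ Ioo 0 w, q t = -2 / t ^ 3 + ed t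
  elim : Tendsto e (𝓝[>] 0) (𝓝 0)
  elim' : Tendsto ed (𝓝[>] 0) (𝓝 0)

variable {w : ℝ} {p q e ed : ℝ → ℝ}

lemma RealWP.pos (H : RealWP w p q e ed) {t : ℝ} (ht : t ∈ Ioo 0 w) : 0 < p t := by
  have h := H.ode t ht
  by_contra hn
  have : p t ^ 3 ≤ 0 := by
    have : p t ^ 3 = p t * p t ^ 2 := by ring
    rw [this]
    exact mul_nonpos_of_nonpos_of_nonneg (not_lt.mp hn) (sq_nonneg _)
  nlinarith [sq_nonneg (q t)]

lemma RealWP.mono (H : RealWP w p q e ed) : StrictMonoOn q (Ioo 0 w) := by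
  apply strictMonoOn_of_deriv_pos (convex_Ioo _ _)
  · exact fun t ht => (H.hq t ht).continuousAt.continuousWithinAt
  · rw [interior_Ioo]
    intro t ht
    rw [(H.hq t ht).deriv]
    have := H.pos ht
    positivity

lemma RealWP.neg (H : RealWP w p q e ed) {t : ℝ} (ht : t ∈ Ioo 0 (w / 2)) : q t < 0 := by
  obtain ⟨h1, h2⟩ := ht
  have := H.mono (a := t) (b := w - t) ⟨h1, by linarith⟩ ⟨by linarith, by linarith⟩ (by linarith)
  rw [H.odd] at this
  linarith

lemma RealWP.anti (H : RealWP w p q e ed) : StrictAntiOn p (Ioo 0 (w / 2)) := by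
  have hw := H.hw
  apply strictAntiOn_of_deriv_neg (convex_Ioo _ _)
  · exact fun t ht => (H.hp t ⟨ht.1, by linarith [ht.2]⟩).continuousAt.continuousWithinAt
  · rw [interior_Ioo]
    intro t ht
    rw [(H.hp t ⟨ht.1, by linarith [ht.2]⟩).deriv]
    exact H.neg ht

lemma RealWP.dup (H : RealWP w p q e ed) {u : ℝ} (hu : u ∈ Ioo 0 (w / 2)) :
    p (2 * u) = 9 * p u ^ 4 / (4 * p u ^ 3 - 1) - 2 * p u := by
  have hw := H.hw
  obtain ⟨hu0, hu1⟩ := hu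
  have mem1 : ∀ t ∈ Ioc 0 u, t ∈ Ioo 0 w := fun t ht => ⟨ht.1, by linarith [ht.2]⟩
  have mem2 : ∀ t ∈ Ioc 0 u, 2 * u - t ∈ Ioo 0 w :=
    fun t ht => ⟨by linarith [ht.2], by linarith [ht.1]⟩
  have hpc : ∀ t ∈ Ioc 0 u, HasDerivAt (fun s => p (2 * u - s)) (- q (2 * u - t)) t := by
    intro t ht
    have := (H.hp _ (mem2 t ht)).comp_const_sub (2 * u) t
    simpa using this
  have hqc : ∀ t ∈ Ioc 0 u, HasDerivAt (fun s => q (2 * u - s)) (- (6 * p (2 * u - t) ^ 2)) t := by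
    intro t ht
    have := (H.hq _ (mem2 t ht)).comp_const_sub (2 * u) t
    simpa using this
  have hD : ∀ t ∈ Ioc 0 u, HasDerivAt (fun s => p s - p (2 * u - s)) (q t + q (2 * u - t)) t := by
    intro t ht
    have := (H.hp t (mem1 t ht)).sub (hpc t ht)
    convert! this using 1
    ring
  have hN : ∀ t ∈ Ioc 0 u, HasDerivAt (fun s => q s - q (2 * u - s))
      (6 * p t ^ 2 + 6 * p (2 * u - t) ^ 2) t := by
    intro t ht
    have := (H.hq t (mem1 t ht)).sub (hqc t ht)
    convert! this using 1
    ring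
  have hDanti : StrictAntiOn (fun s => p s - p (2 * u - s)) (Ioc 0 u) := by
    apply strictAntiOn_of_deriv_neg (convex_Ioc _ _)
    · exact fun t ht => (hD t ht).continuousAt.continuousWithinAt
    · rw [interior_Ioc]
      intro t ht
      have ht' : t ∈ Ioc 0 u := ⟨ht.1, ht.2.le⟩
      rw [(hD t ht').deriv]
      have := H.mono (a := 2 * u - t) (b := w - t) (mem2 t ht')
        ⟨by linarith [ht.2], by linarith [ht.1]⟩ (by linarith)
      rw [H.odd] at this
      linarith
  have hDpos : ∀ t ∈ Ioo 0 u, 0 < p t - p (2 * u - t) := by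
    intro t ht
    have := hDanti (a := t) (b := u) ⟨ht.1, ht.2.le⟩ ⟨hu0, le_rfl⟩ ht.2
    have e1 : 2 * u - u = u := by ring
    simpa [e1] using this
  -- the first integral
  set F : ℝ → ℝ := fun t => ((q t - q (2 * u - t)) / (p t - p (2 * u - t))) ^ 2 / 4
    - p t - p (2 * u - t) with hF
  have hFd : ∀ t ∈ Ioo 0 u, HasDerivAt F 0 t := by
    intro t ht
    have ht' : t ∈ Ioc 0 u := ⟨ht.1, ht.2.le⟩
    have hne := (hDpos t ht).ne'
    have h := (((((hN t ht').div (hD t ht') hne).pow 2).div_const 4).sub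
      (H.hp t (mem1 t ht'))).sub (hpc t ht')
    convert! h using 1
    simp only [Pi.div_apply]
    have o1 := H.ode t (mem1 t ht')
    have o2 := H.ode _ (mem2 t ht')
    generalize p t = x at *
    generalize q t = X at *
    generalize p (2 * u - t) = y at *
    generalize q (2 * u - t) = Y at *
    have key : (6 * x ^ 2 + 6 * y ^ 2) * (x - y) - (X - Y) * (X + Y) = 2 * (x - y) ^ 3 := by
      linear_combination -o1 + o2
    rw [key, show 2 - 1 = 1 from rfl, pow_one]
    push_cast
    field_simp
    ring
  obtain ⟨C, hC⟩ : ∃ C, ∀ t ∈ Ioo 0 u, F t = C := by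
    refine ⟨F (u / 2), fun t ht => ?_⟩
    exact isOpen_Ioo.is_const_of_deriv_eq_zero isPreconnected_Ioo
      (fun t ht => (hFd t ht).differentiableAt.differentiableWithinAt)
      (fun t ht => (hFd t ht).deriv) ht ⟨by linarith, by linarith⟩
  -- limit at u
  have hlim1 : Tendsto F (𝓝[<] u) (𝓝 (9 * p u ^ 4 / (4 * p u ^ 3 - 1) - 2 * p u)) := by
    have humem : u ∈ Ioc 0 u := ⟨hu0, le_rfl⟩
    have e1 : 2 * u - u = u := by ring
    have s1 := (hasDerivAt_iff_tendsto_slope.mp (hN u humem)).mono_left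
      (nhdsWithin_mono u (fun x hx => ne_of_lt hx) : 𝓝[<] u ≤ 𝓝[≠] u)
    have s2 := (hasDerivAt_iff_tendsto_slope.mp (hD u humem)).mono_left
      (nhdsWithin_mono u (fun x hx => ne_of_lt hx) : 𝓝[<] u ≤ 𝓝[≠] u)
    have hqn := H.neg ⟨hu0, hu1⟩
    rw [e1] at s1 s2
    have s3 := s1.div s2 (by linarith)
    have c1 : Tendsto p (𝓝[<] u) (𝓝 (p u)) :=
      (H.hp u (mem1 u humem)).continuousAt.tendsto.mono_left nhdsWithin_le_nhds
    have c2 : Tendsto (fun s => p (2 * u - s)) (𝓝[<] u) (𝓝 (p u)) := by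
      have := (hpc u humem).continuousAt.tendsto.mono_left (nhdsWithin_le_nhds (s := Iio u))
      simpa [e1] using this
    have s4 := (((s3.pow 2).div_const 4).sub c1).sub c2
    have o := H.ode u (mem1 u humem)
    have val : 9 * p u ^ 4 / (4 * p u ^ 3 - 1) - 2 * p u
        = ((6 * p u ^ 2 + 6 * p u ^ 2) / (q u + q u)) ^ 2 / 4 - p u - p u := by
      rw [← o]
      have : q u ≠ 0 := hqn.ne
      field_simp
      ring
    rw [val]
    refine s4.congr' ?_
    filter_upwards [self_mem_nhdsWithin] with t ht
    have ht : t < u := ht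
    have : t - u ≠ 0 := by linarith
    simp only [hF, slope_def_field, Pi.div_apply, e1, sub_self, sub_zero]
    rw [div_div_div_cancel_right₀ this]
  have hC1 : C = 9 * p u ^ 4 / (4 * p u ^ 3 - 1) - 2 * p u := by
    refine tendsto_nhds_unique (tendsto_const_nhds.congr' ?_) hlim1
    filter_upwards [Ioo_mem_nhdsLT hu0] with t ht
    exact (hC t ht).symm
  -- limit at 0
  have hlim0 : Tendsto F (𝓝[>] 0) (𝓝 (p (2 * u))) := by
    have m : 2 * u ∈ Ioo 0 w := ⟨by linarith, by linarith⟩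
    have sub0 : Tendsto (fun s : ℝ => 2 * u - s) (𝓝[>] 0) (𝓝 (2 * u)) := by
      have : Tendsto (fun s : ℝ => 2 * u - s) (𝓝 0) (𝓝 (2 * u - 0)) := by
        exact (continuous_const.sub continuous_id).tendsto 0
      rw [sub_zero] at this
      exact this.mono_left nhdsWithin_le_nhds
    have c1 : Tendsto (fun s => p (2 * u - s)) (𝓝[>] 0) (𝓝 (p (2 * u))) :=
      (H.hp _ m).continuousAt.tendsto.comp sub0
    have c2 : Tendsto (fun s => q (2 * u - s)) (𝓝[>] 0) (𝓝 (q (2 * u))) :=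
      (H.hq _ m).continuousAt.tendsto.comp sub0
    have t0 : Tendsto (fun s : ℝ => s) (𝓝[>] 0) (𝓝 0) := nhdsWithin_le_nhds
    have A := H.elim'.sub c2
    have B := H.elim.sub c1
    -- F t = (t * (t^3 A^2/4 - A) - 2 B - B^2 t^2) / (1 + B t^2)^2 - e - y
    have num := (((t0.mul (((t0.pow 3).mul (A.pow 2)).div_const 4 |>.sub A)).sub
      (B.const_mul 2)).sub ((B.pow 2).mul (t0.pow 2)))
    have den := ((B.mul (t0.pow 2)).const_add 1).pow 2
    have G := ((num.div den (by norm_num)).sub H.elim).sub c1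
    have val : p (2 * u) = (0 * (0 ^ 3 * (0 - q (2 * u)) ^ 2 / 4 - (0 - q (2 * u))) -
        2 * (0 - p (2 * u)) - (0 - p (2 * u)) ^ 2 * 0 ^ 2) /
        (1 + (0 - p (2 * u)) * 0 ^ 2) ^ 2 - 0 - p (2 * u) := by
      ring
    rw [val]
    refine G.congr' ?_
    filter_upwards [Ioo_mem_nhdsGT hu0] with t ht
    have ht' : t ∈ Ioc 0 u := ⟨ht.1, ht.2.le⟩
    have hne := (hDpos t ht).ne'
    simp only [hF, Pi.div_apply]
    rw [H.pe t (mem1 t ht')] at hne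
    rw [H.pe t (mem1 t ht'), H.qe t (mem1 t ht')]
    generalize e t = E at *
    generalize ed t = E' at *
    generalize p (2 * u - t) = y at *
    generalize q (2 * u - t) = Y at *
    have t1 : t ≠ 0 := ht.1.ne'
    have hr : 1 / t ^ 2 + E - y = (1 + (E - y) * t ^ 2) / t ^ 2 := by
      field_simp
      ring
    have hne2 : 1 + (E - y) * t ^ 2 ≠ 0 := by
      intro h0
      rw [hr, h0] at hne
      simp at hne
    have hne3 : 1 + t ^ 2 * (E - y) ≠ 0 := by
      rw [mul_comm]
      exact hne2
    rw [hr]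
    field_simp
    ring
  have hC0 : C = p (2 * u) := by
    refine tendsto_nhds_unique (tendsto_const_nhds.congr' ?_) hlim0
    filter_upwards [Ioo_mem_nhdsGT hu0] with t ht
    exact (hC t ht).symm
  rw [← hC0, hC1]

lemma RealWP.value (H : RealWP w p q e ed) :
    p (w / 6) = 1 + (2 : ℝ) ^ ((1 : ℝ) / 3) + (4 : ℝ) ^ ((1 : ℝ) / 3) := by
  have hw := H.hw
  have m6 : w / 6 ∈ Ioo 0 (w / 2) := ⟨by linarith, by linarith⟩
  have m3 : w / 3 ∈ Ioo 0 (w / 2) := ⟨by linarith, by linarith⟩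
  have d3 := H.dup m3
  have d6 := H.dup m6
  have ev := H.even (w / 3)
  have lt := H.anti m6 m3 (by linarith)
  have pos3 : 0 < 4 * p (w / 3) ^ 3 - 1 := by
    rw [← H.ode _ ⟨by linarith, by linarith⟩]
    have := (H.neg m3).ne
    positivity
  have pos6 : 0 < 4 * p (w / 6) ^ 3 - 1 := by
    rw [← H.ode _ ⟨by linarith, by linarith⟩]
    have := (H.neg m6).ne
    positivity
  have ppos3 := H.pos (t := w / 3) ⟨by linarith, by linarith⟩
  have x1 : w - w / 3 = 2 * (w / 3) := by ring
  have x2 : 2 * (w / 6) = w / 3 := by ring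
  rw [x1] at ev
  rw [ev] at d3
  rw [x2] at d6
  generalize p (w / 3) = b at *
  generalize p (w / 6) = a at *
  have hb : b = 1 := by
    rw [eq_sub_iff_add_eq, eq_div_iff pos3.ne'] at d3
    have h1 : (b - 1) * (b ^ 2 + b + 1) = 0 := by
      have : b * ((b - 1) * (b ^ 2 + b + 1)) = 0 := by
        linear_combination d3 / 3
      exact (mul_eq_zero.mp this).resolve_left ppos3.ne'
    have := (mul_eq_zero.mp h1).resolve_right (by positivity)
    linarith
  subst hb
  have hcub : (a + 1) ^ 3 = 2 * a ^ 3 := by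
    rw [eq_sub_iff_add_eq, eq_div_iff pos6.ne'] at d6
    have : (a - 1) * (a ^ 3 - 3 * a ^ 2 - 3 * a - 1) = 0 := by linear_combination -d6
    have := (mul_eq_zero.mp this).resolve_left (by linarith)
    linear_combination -this
  set s : ℝ := (2 : ℝ) ^ ((1 : ℝ) / 3) with hs
  have s3 : s ^ 3 = 2 := by
    rw [hs, ← Real.rpow_natCast, ← Real.rpow_mul (by norm_num)]
    norm_num
  have s2 : (4 : ℝ) ^ ((1 : ℝ) / 3) = s ^ 2 := by
    rw [hs, ← Real.rpow_natCast, ← Real.rpow_mul (by norm_num), show (4 : ℝ) = 2 ^ (2 : ℝ) by norm_num,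
      ← Real.rpow_mul (by norm_num)]
    norm_num
  rw [s2]
  have hl : a + 1 = s * a := by
    have : Odd 3 := by decide
    apply this.strictMono_pow.injective
    simp only [mul_pow, s3, hcub]
  linear_combination -(1 + s + s ^ 2) * hl - a * s3
end RealPart

section ComplexPart
open Set Filter Topology
open scoped PeriodPair

lemma tau_im : tau.im = Real.sqrt 3 / 2 := by
  simp [tau]

lemma tau_sq : tau ^ 2 = -1 - tau := by
  have h : ((Real.sqrt 3 : ℝ) : ℂ) ^ 2 = 3 := by
    rw [← Complex.ofReal_pow, Real.sq_sqrt (by norm_num)]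
    norm_num
  unfold tau
  linear_combination (Complex.I ^ 2 / 4) * h + (3 / 4) * Complex.I_sq

lemma tau_conj : conj tau = -1 - tau := by
  unfold tau
  simp only [map_div₀, map_add, map_neg, map_one, map_mul, Complex.conj_ofReal, Complex.conj_I,
    map_ofNat]
  ring

lemma mem_Eis_iff (z : ℂ) : z ∈ Eis ↔ ∃ m n : ℤ, z = m + n * tau := by
  constructor
  · intro h
    unfold Eis at h
    induction h using Subring.closure_induction with
    | mem x hx => exact ⟨0, 1, by rw [mem_singleton_iff.mp hx]; simp⟩
    | zero => exact ⟨0, 0, by simp⟩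
    | one => exact ⟨1, 0, by simp⟩
    | add x y _ _ hx hy =>
      obtain ⟨m, n, rfl⟩ := hx
      obtain ⟨a, b, rfl⟩ := hy
      exact ⟨m + a, n + b, by push_cast; ring⟩
    | neg x _ hx =>
      obtain ⟨m, n, rfl⟩ := hx
      exact ⟨-m, -n, by push_cast; ring⟩
    | mul x y _ _ hx hy =>
      obtain ⟨m, n, rfl⟩ := hx
      obtain ⟨a, b, rfl⟩ := hy
      exact ⟨m * a - n * b, m * b + n * a - n * b, by
        push_cast; linear_combination (n * b : ℂ) * tau_sq⟩
  · rintro ⟨m, n, rfl⟩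
    exact add_mem (intCast_mem _ _) (mul_mem (intCast_mem _ _) (Subring.subset_closure rfl))

/-- The period pair `(ω, ωτ)`. -/
def eisPair (ω : ℝ) (hω : 0 < ω) : PeriodPair where
  ω₁ := ω
  ω₂ := ω * tau
  indep := by
    rw [LinearIndependent.pair_iff]
    intro s t h
    have h1 := congrArg Complex.im h
    have h2 := congrArg Complex.re h
    have h3 : (0 : ℝ) < Real.sqrt 3 := by positivity
    simp [tau_im, hω.ne'] at h1 h2
    have ht : t = 0 := h1
    subst ht
    simp at h2
    exact ⟨by simpa [hω.ne'] using h2, rfl⟩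

variable {ω : ℝ} (hω : 0 < ω)

lemma mem_eisPair (z : ℂ) : z ∈ (eisPair ω hω).lattice ↔ inLattice ω z := by
  rw [PeriodPair.mem_lattice]
  constructor
  · rintro ⟨m, n, rfl⟩
    exact ⟨⟨m + n * tau, (mem_Eis_iff _).mpr ⟨m, n, rfl⟩⟩, by simp [eisPair]; ring⟩
  · rintro ⟨⟨a, ha⟩, rfl⟩
    obtain ⟨m, n, rfl⟩ := (mem_Eis_iff _).mp ha
    exact ⟨m, n, by simp [eisPair]; ring⟩

lemma wp_eq (z : ℂ) : wp ω z = ℘[eisPair ω hω] z := by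
  set L := eisPair ω hω with hL
  have h := L.weierstrassPExcept_add 0 z
  rw [← h, wp, PeriodPair.weierstrassPExcept]
  simp only [ZeroMemClass.coe_zero, sub_zero]
  rw [add_comm]
  congr 1
  · have h1 := tsum_subtype {w : ℂ | inLattice ω w ∧ w ≠ 0}
      (fun a : ℂ => 1 / (z - a) ^ 2 - 1 / a ^ 2)
    have h2 := tsum_subtype (L.lattice : Set ℂ)
      (fun a : ℂ => if a = 0 then 0 else 1 / (z - a) ^ 2 - 1 / a ^ 2)
    refine h1.trans (Eq.trans ?_ h2.symm)
    congr 1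
    ext a
    have := mem_eisPair hω a
    by_cases h0 : a = 0 <;> by_cases h1 : inLattice ω a <;> simp_all [indicator]
  · simp

lemma conj_mem {z : ℂ} (hz : z ∈ (eisPair ω hω).lattice) :
    conj z ∈ (eisPair ω hω).lattice := by
  rw [PeriodPair.mem_lattice] at *
  obtain ⟨m, n, rfl⟩ := hz
  refine ⟨m - n, -n, ?_⟩
  simp [eisPair, tau_conj]
  ring

/-- Conjugation on the lattice. -/
def conjEquiv : (eisPair ω hω).lattice ≃ (eisPair ω hω).lattice where
  toFun z := ⟨conj z.1, conj_mem hω z.2⟩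
  invFun z := ⟨conj z.1, conj_mem hω z.2⟩
  left_inv z := by simp
  right_inv z := by simp

lemma conj_wp (t : ℝ) : conj (℘[eisPair ω hω] t) = ℘[eisPair ω hω] t := by
  unfold PeriodPair.weierstrassP
  rw [Complex.conj_tsum, ← (conjEquiv hω).tsum_eq]
  simp [conjEquiv]

lemma conj_wp' (t : ℝ) : conj ((PeriodPair.derivWeierstrassP (eisPair ω hω)) t) = (PeriodPair.derivWeierstrassP (eisPair ω hω)) t := by
  unfold PeriodPair.derivWeierstrassP
  rw [map_neg, Complex.conj_tsum, ← (conjEquiv hω).tsum_eq]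
  have h2 : (starRingEnd ℂ) 2 = 2 := map_ofNat _ 2
  simp [conjEquiv, h2]

lemma notMem_of_Ioo {t : ℝ} (ht : t ∈ Ioo 0 ω) : (t : ℂ) ∉ (eisPair ω hω).lattice := by
  rw [PeriodPair.mem_lattice]
  rintro ⟨m, n, h⟩
  have h1 := congrArg Complex.im h
  have h2 := congrArg Complex.re h
  have h3 : (0 : ℝ) < Real.sqrt 3 := by positivity
  simp [eisPair, tau_im, hω.ne'] at h1 h2
  subst h1
  simp at h2
  obtain ⟨a, b⟩ := ht
  rw [← h2] at a b
  have a' : (0 : ℝ) < m := by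
    by_contra hh
    nlinarith
  have b' : (m : ℝ) < 1 := by
    by_contra hh
    nlinarith
  norm_cast at a' b'
  lia

end ComplexPart

section Final
open Set Filter Topology
open scoped PeriodPair

variable {ω : ℝ} (hω : 0 < ω)

lemma isPreconnected_compl : IsPreconnected (((eisPair ω hω).lattice : Set ℂ)ᶜ) :=
  (Set.Countable.isConnected_compl_of_one_lt_rank (by simp)
    (countable_of_Lindelof_of_discrete (X := (eisPair ω hω).lattice))).2

lemma tendsto_except (hω : 0 < ω) :
    Tendsto ℘[(eisPair ω hω) - (0 : ℂ)] (𝓝 0) (𝓝 0) := by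
  have := ((eisPair ω hω).analyticAt_weierstrassPExcept 0).continuousAt.tendsto
  simpa using this

lemma tendsto_except' (hω : 0 < ω) :
    Tendsto (PeriodPair.derivWeierstrassPExcept (eisPair ω hω) (0 : ℂ)) (𝓝 0) (𝓝 0) := by
  have := ((eisPair ω hω).analyticAt_derivWeierstrassPExcept 0).continuousAt.tendsto
  simpa using this

lemma wp_expand (z : ℂ) :
    ℘[eisPair ω hω] z = 1 / z ^ 2 + ℘[(eisPair ω hω) - (0 : ℂ)] z := by
  have := (eisPair ω hω).weierstrassPExcept_add 0 z
  rw [← this]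
  simp [add_comm]

lemma wp'_expand (z : ℂ) :
    (PeriodPair.derivWeierstrassP (eisPair ω hω)) z = -2 / z ^ 3 + (PeriodPair.derivWeierstrassPExcept (eisPair ω hω) (0 : ℂ)) z := by
  have := (eisPair ω hω).derivWeierstrassPExcept_sub 0 z
  rw [← this]
  simp
  ring

lemma tendsto_ofReal_zero : Tendsto (fun t : ℝ => (t : ℂ)) (𝓝[>] 0) (𝓝 0) := by
  have := Complex.continuous_ofReal.tendsto 0
  exact (this.mono_left nhdsWithin_le_nhds).trans (by simp)

lemma wp'_ne_zero : ¬ ∀ z ∈ ((eisPair ω hω).lattice : Set ℂ)ᶜ, (PeriodPair.derivWeierstrassP (eisPair ω hω)) z = 0 := by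
  intro h
  have h1 := (tendsto_except' hω).comp tendsto_ofReal_zero
  have h2 := (tendsto_ofReal_zero.pow 3).mul h1
  simp only [ne_eq, OfNat.ofNat_ne_zero, not_false_eq_true, zero_pow, mul_zero] at h2
  have h3 : Tendsto (fun _ : ℝ => (2 : ℂ)) (𝓝[>] 0) (𝓝 0) := by
    refine h2.congr' ?_
    filter_upwards [Ioo_mem_nhdsGT hω] with t ht
    have h4 := h t (notMem_of_Ioo hω ht)
    rw [wp'_expand] at h4
    have h5 : (t : ℂ) ≠ 0 := by exact_mod_cast ht.1.ne'
    simp only [Function.comp]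
    field_simp at h4
    linear_combination h4
  have := tendsto_nhds_unique h3 tendsto_const_nhds
  norm_num at this

lemma hasDerivAt_wp {z : ℂ} (hz : z ∉ (eisPair ω hω).lattice) :
    HasDerivAt ℘[eisPair ω hω] ((PeriodPair.derivWeierstrassP (eisPair ω hω)) z) z := by
  rw [← PeriodPair.deriv_weierstrassP]
  exact ((eisPair ω hω).analyticOnNhd_weierstrassP z hz).differentiableAt.hasDerivAt

lemma hasDerivAt_wp' (ode : ∀ z ∉ (eisPair ω hω).lattice,
      (PeriodPair.derivWeierstrassP (eisPair ω hω)) z ^ 2 = 4 * ℘[eisPair ω hω] z ^ 3 - 1)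
    {z : ℂ} (hz : z ∉ (eisPair ω hω).lattice) :
    HasDerivAt (PeriodPair.derivWeierstrassP (eisPair ω hω)) (6 * ℘[eisPair ω hω] z ^ 2) z := by
  set L := eisPair ω hω with hL
  have an := L.analyticOnNhd_derivWeierstrassP
  have an0 := L.analyticOnNhd_weierstrassP
  have hd : ∀ z ∉ L.lattice, HasDerivAt (PeriodPair.derivWeierstrassP L) (deriv (PeriodPair.derivWeierstrassP L) z) z :=
    fun z hz => (an z hz).differentiableAt.hasDerivAt
  have hprod : ∀ z ∈ (L.lattice : Set ℂ)ᶜ,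
      (PeriodPair.derivWeierstrassP L) z * (deriv (PeriodPair.derivWeierstrassP L) z - 6 * ℘[L] z ^ 2) = 0 := by
    intro z hz
    have h1 := (hd z hz).pow 2
    have h2 := (((hasDerivAt_wp hω hz).pow 3).const_mul 4).sub_const 1
    have h3 : ((PeriodPair.derivWeierstrassP L) ^ 2) =ᶠ[𝓝 z] fun z => 4 * (℘[L] ^ 3) z - 1 := by
      filter_upwards [L.isClosed_lattice.isOpen_compl.mem_nhds hz] with y hy
      exact ode y hy
    have h4 := h1.unique (h2.congr_of_eventuallyEq h3)
    rw [← hL] at h4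
    norm_num at h4
    linear_combination h4 / 2
  have := an.eq_zero_or_eq_zero_of_mul_eq_zero
    (g := fun z => deriv (PeriodPair.derivWeierstrassP L) z - 6 * ℘[L] z ^ 2)
    (an.deriv.sub (analyticOnNhd_const.mul (an0.pow 2))) hprod (isPreconnected_compl hω)
  have h := this.resolve_left (wp'_ne_zero hω) z hz
  rw [← sub_eq_zero.mp h]
  exact hd z hz

lemma realWP (ode : ∀ z ∉ (eisPair ω hω).lattice,
      (PeriodPair.derivWeierstrassP (eisPair ω hω)) z ^ 2 = 4 * ℘[eisPair ω hω] z ^ 3 - 1) :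
    RealWP ω (fun t => (℘[eisPair ω hω] t).re) (fun t => ((PeriodPair.derivWeierstrassP (eisPair ω hω)) t).re)
      (fun t => (℘[(eisPair ω hω) - (0 : ℂ)] t).re)
      (fun t => ((PeriodPair.derivWeierstrassPExcept (eisPair ω hω) (0 : ℂ)) t).re) := by
  have r : ∀ t : ℝ, (((℘[eisPair ω hω] t).re : ℝ) : ℂ) = ℘[eisPair ω hω] t :=
    fun t => Complex.conj_eq_iff_re.mp (conj_wp hω t)
  have r' : ∀ t : ℝ, ((((PeriodPair.derivWeierstrassP (eisPair ω hω)) t).re : ℝ) : ℂ) = (PeriodPair.derivWeierstrassP (eisPair ω hω)) t :=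
    fun t => Complex.conj_eq_iff_re.mp (conj_wp' hω t)
  have hmem : (ω : ℂ) ∈ (eisPair ω hω).lattice := (eisPair ω hω).ω₁_mem_lattice
  refine ⟨hω, fun t ht => ?_, fun t ht => ?_, fun t ht => ?_, fun t => ?_, fun t => ?_,
    fun t ht => ?_, fun t ht => ?_, ?_, ?_⟩
  · exact (hasDerivAt_wp hω (notMem_of_Ioo hω ht)).real_of_complex
  · have := (hasDerivAt_wp' hω ode (notMem_of_Ioo hω ht)).real_of_complex
    convert! this using 1
    rw [← r t]
    norm_cast
  · have := ode t (notMem_of_Ioo hω ht)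
    rw [← r t, ← r' t] at this
    exact_mod_cast this
  · have := (eisPair ω hω).derivWeierstrassP_add_coe (-t) ⟨ω, hmem⟩
    rw [PeriodPair.derivWeierstrassP_neg] at this
    rw [show ((ω - t : ℝ) : ℂ) = -t + ω by push_cast; ring, this]
    simp
  · have := (eisPair ω hω).weierstrassP_add_coe (-t) ⟨ω, hmem⟩
    rw [PeriodPair.weierstrassP_neg] at this
    rw [show ((ω - t : ℝ) : ℂ) = -t + ω by push_cast; ring, this]
  · rw [wp_expand, Complex.add_re]
    congr 1
    rw [← Complex.ofReal_re (1 / t ^ 2)]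
    push_cast
    rfl
  · rw [wp'_expand, Complex.add_re]
    congr 1
    rw [← Complex.ofReal_re (-2 / t ^ 3)]
    push_cast
    rfl
  · exact (Complex.continuous_re.tendsto 0).comp ((tendsto_except hω).comp tendsto_ofReal_zero)
  · exact (Complex.continuous_re.tendsto 0).comp ((tendsto_except' hω).comp tendsto_ofReal_zero)

end Final

/-- From [Qiu], (2.11): `℘(ω/6) = 1 + ∛2 + ∛4`.
Here `ω > 0` is pinned down by the differential equation `℘′² = 4℘³ − 1` for the
lattice `L_ω = ω·ℤ[τ]` (equivalently, the lattice invariants are `g₂ = 0`, `g₃ = 1`). -/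
theorem wp_value_at_one_sixth
    (ω : ℝ) (hω : 0 < ω)
    (hODE : ∀ z : ℂ, ¬ inLattice ω z → deriv (wp ω) z ^ 2 = 4 * wp ω z ^ 3 - 1) :
    wp ω ((ω : ℂ) / 6) = 1 + cbrt2 + cbrt4 := by
  have hfun : wp ω = PeriodPair.weierstrassP (eisPair ω hω) := funext (wp_eq hω)
  have ode : ∀ z ∉ (eisPair ω hω).lattice, PeriodPair.derivWeierstrassP (eisPair ω hω) z ^ 2 =
      4 * PeriodPair.weierstrassP (eisPair ω hω) z ^ 3 - 1 := by
    intro z hz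
    have := hODE z (fun h => hz ((mem_eisPair hω z).mpr h))
    rwa [hfun, PeriodPair.deriv_weierstrassP] at this
  have hv := (realWP hω ode).value
  have hr : (((PeriodPair.weierstrassP (eisPair ω hω) ((ω / 6 : ℝ) : ℂ)).re : ℝ) : ℂ) =
      PeriodPair.weierstrassP (eisPair ω hω) ((ω / 6 : ℝ) : ℂ) :=
    Complex.conj_eq_iff_re.mp (conj_wp hω _)
  rw [hv] at hr
  rw [hfun, show (ω : ℂ) / 6 = ((ω / 6 : ℝ) : ℂ) by push_cast; ring, ← hr, cbrt2, cbrt4]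
  push_cast
  ring
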